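/- Lower bound for the first Picard iterate in Fourier–Lebesgue norms: let k ≥ 2 be an integer, s < 0 and 1 ≤ q ≤ ∞. There exist constants c > 0 and δ > 0, depending only on k, s and q, such that for all R > 0, all A ≥ 1, all N with A ≤ δ·N, and all T with 0 < T ≤ δ, one has ‖⟨ξ⟩^s Ξ̂₁(φ̂, 0)(T)‖_{L^q(ℝ)} ≥ c·R^k·T²·A^{k − 1 + 1/q + s}, where φ̂ = R·χ_Ω, the convention 1/q = 0 is used for q = ∞, and Ξ̂₁(φ̂, 0)(T,ξ) = ∫₀ᵀ sin((T−t')λ(ξ))·λ(ξ)·((cos(t'λ(·))·φ̂)^{∗k})(ξ) dt' is the k-fold self-convolution Duhamel term. -/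

import Mathlib

open MeasureTheory Filter
open scoped ENNReal

noncomputable section

/-- The Japanese bracket weight `⟨ξ⟩^s = (1+ξ²)^(s/2)`. -/
def jbw (s ξ : ℝ) : ℝ := (1 + ξ ^ 2) ^ (s / 2)

/-- `λ(ξ) = |ξ|/⟨ξ⟩`. -/
def lam (ξ : ℝ) : ℝ := |ξ| / (1 + ξ ^ 2) ^ ((1 : ℝ) / 2)

/-- The multiplier `m(t,ξ) = sin(tλ(ξ))/λ(ξ)` for `ξ ≠ 0`, `m(t,0) = t`. -/
def mker (t ξ : ℝ) : ℝ := if ξ = 0 then t else Real.sin (t * lam ξ) / lam ξ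

/-- Fourier side linear propagator `Ŝ(t)(v₀,v₁)`. -/
def Shat (t : ℝ) (v₀ v₁ : ℝ → ℂ) (ξ : ℝ) : ℂ :=
  (Real.cos (t * lam ξ) : ℂ) * v₀ ξ + (mker t ξ : ℂ) * v₁ ξ

/-- Convolution of complex valued functions on `ℝ`. -/
def conv (f g : ℝ → ℂ) (ξ : ℝ) : ℂ := ∫ η, f η * g (ξ - η)

/-- Iterated convolution of a list of functions. -/
def convList : List (ℝ → ℂ) → ℝ → ℂ
  | [] => fun _ => 0
  | [f] => f
  | f :: g :: fs => conv f (convList (g :: fs))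

/-- Fourier side Duhamel operator `Î_k`. -/
def Ihat (k : ℕ) (w : Fin k → ℝ → ℝ → ℂ) (t ξ : ℝ) : ℂ :=
  ∫ t' in (0:ℝ)..t,
    ((Real.sin ((t - t') * lam ξ) * lam ξ : ℝ) : ℂ) * convList (List.ofFn fun i => w i t') ξ

/-- Continuity of a curve of functions with respect to the `L¹` norm, on `[0,T]`. -/
def ContinuousL1On (T : ℝ) (v : ℝ → ℝ → ℂ) : Prop :=
  ∀ t₀ ∈ Set.Icc (0 : ℝ) T,
    Tendsto (fun t => eLpNorm (fun ξ => v t ξ - v t₀ ξ) 1 volume)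
      (nhdsWithin t₀ (Set.Icc (0 : ℝ) T)) (nhds 0)

/-- Fourier-side solution of the generalized improved Boussinesq equation with
nonlinearity `u^k` and data `(v₀, v₁)` on `[0, T]`. -/
def IsGIBqSol (k : ℕ) (T : ℝ) (v₀ v₁ : ℝ → ℂ) (v : ℝ → ℝ → ℂ) : Prop :=
  (∀ t ∈ Set.Icc (0 : ℝ) T, Integrable (v t)) ∧
  ContinuousL1On T v ∧
  ∀ t ∈ Set.Icc (0 : ℝ) T,
    ∀ᵐ ξ ∂volume, v t ξ = Shat t v₀ v₁ ξ + Ihat k (fun _ => v) t ξ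

/-- Picard iterates `Ξ̂_j` for gIBq on the Fourier side. -/
def Xi (k : ℕ) (v₀ v₁ : ℝ → ℂ) : ℕ → ℝ → ℝ → ℂ
  | 0 => fun t => Shat t v₀ v₁
  | (j+1) => fun t ξ =>
      ∑ p ∈ (Finset.Nat.antidiagonalTuple k j).attach,
        Ihat k (fun i => Xi k v₀ v₁ (p.1 i)) t ξ
decreasing_by
  have hsum := Finset.Nat.mem_antidiagonalTuple.mp p.2
  have hle : p.1 i ≤ j := by
    calc p.1 i ≤ ∑ i', p.1 i' :=
          Finset.single_le_sum (fun _ _ => Nat.zero_le _) (Finset.mem_univ i)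
      _ = j := hsum
  omega

/-- The `FL^{s,p}` norm on the Fourier side: `‖⟨ξ⟩^s w‖_{L^p}`. -/
def FLnorm (s : ℝ) (p : ℝ≥0∞) (w : ℝ → ℂ) : ℝ≥0∞ :=
  eLpNorm (fun ξ => jbw s ξ * ‖w ξ‖) p volume

end

noncomputable section

/-- The frequency set `Ω = ⋃_{η ∈ {-2N,-N,N,2N}} [η - A/2, η + A/2]`. -/
def Omeg (N A : ℝ) : Set ℝ :=
  ⋃ η ∈ ({-(2 * N), -N, N, 2 * N} : Set ℝ), Set.Icc (η - A / 2) (η + A / 2)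

/-- The Fourier-side perturbation `φ̂ = R·χ_Ω`. -/
def phihat (R N A : ℝ) : ℝ → ℂ := Set.indicator (Omeg N A) fun _ => (R : ℂ)

end

/-!
Everything in the first iterate is nonnegative for short times: `cos (t λ) ≥ 1/2` for `t ≤ 1`, so
the free evolution dominates `φ̂ / 2`, and the Duhamel kernel `sin ((T - t) λ) λ` is nonnegative
with total mass `1 - cos (T λ) ≳ T² λ²`. Hence there is no cancellation, and it is enough to
retain a single family of `k` frequencies of `Σ_N` with sum zero, which exists for every `k ≥ 2`
because `N - N = 0` and `N + N - 2N = 0`. Convolving the `k` corresponding bumps of height `R/2`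
and half-width `A/2` gives at least `(R/2)^k (A/2)^(k-1)` on `|ξ| ≤ A/2`. On `[A/4, A/2]` one has
`λ ≳ 1` and `⟨ξ⟩ ∼ A`, and taking the `L^q` norm over this interval gives the remaining factor
`A^(1/q + s)`.
-/

open scoped ComplexOrder
open Metric (closedBall)

section Convolution

variable {f g : ℝ → ℂ}

lemma conv_nonneg (hf : 0 ≤ f) (hg : 0 ≤ g) : 0 ≤ conv f g :=
  fun ξ => integral_nonneg fun η => mul_nonneg (hf η) (hg (ξ - η))

lemma norm_conv_le {C : ℝ} (hf : Integrable f) (hg : ∀ ξ, ‖g ξ‖ ≤ C) (ξ : ℝ) :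
    ‖conv f g ξ‖ ≤ (∫ η, ‖f η‖) * C := by
  rw [← integral_mul_const]
  refine norm_integral_le_of_norm_le (hf.norm.mul_const C) (ae_of_all _ fun η => ?_)
  rw [norm_mul]
  gcongr
  exact hg _

lemma measurable_uncurry_conv {α : Type*} [MeasurableSpace α] {u v : α → ℝ → ℂ}
    (hu : Measurable (Function.uncurry u)) (hv : Measurable (Function.uncurry v)) :
    Measurable (Function.uncurry fun a => conv (u a) (v a)) := by
  have hu' : Measurable fun p : (α × ℝ) × ℝ => u p.1.1 p.2 :=
    hu.comp (g := Function.uncurry u) (f := fun p : (α × ℝ) × ℝ => (p.1.1, p.2)) (by fun_prop)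
  have hv' : Measurable fun p : (α × ℝ) × ℝ => v p.1.1 (p.1.2 - p.2) :=
    hv.comp (g := Function.uncurry v) (f := fun p : (α × ℝ) × ℝ => (p.1.1, p.1.2 - p.2))
      (by fun_prop)
  exact (hu'.mul hv').stronglyMeasurable.integral_prod_right.measurable

lemma ofReal_mul_le_conv {a b r x y ξ : ℝ} (hb : 0 ≤ b) (hf : 0 ≤ f) (hg : 0 ≤ g)
    (hfg : Integrable fun η => f η * g (ξ - η)) (haf : ∀ η ∈ closedBall x r, (a : ℂ) ≤ f η)
    (hbg : ∀ η ∈ closedBall y r, (b : ℂ) ≤ g η) (hξ : ξ ∈ closedBall (x + y) r) :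
    ((a * b * r : ℝ) : ℂ) ≤ conv f g ξ := by
  rw [Metric.mem_closedBall, Real.dist_eq, abs_le] at hξ
  have hb' : (0 : ℂ) ≤ b := Complex.zero_le_real.mpr hb
  -- The balls around `x` and `ξ - y` both contain the ball of half their radius around the
  -- midpoint of their centers.
  set B := closedBall ((x + (ξ - y)) / 2) (r / 2)
  have hB : ∀ η ∈ B, ((a * b : ℝ) : ℂ) ≤ f η * g (ξ - η) := fun η hη => by
    rw [Metric.mem_closedBall, Real.dist_eq, abs_le] at hη
    rw [Complex.ofReal_mul]
    refine mul_le_mul (haf η ?_) (hbg _ ?_) hb' (hf η) <;>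
      rw [Metric.mem_closedBall, Real.dist_eq, abs_le] <;> constructor <;> linarith
  calc ((a * b * r : ℝ) : ℂ) = ∫ _ in B, ((a * b : ℝ) : ℂ) := by
        rw [setIntegral_const, Real.volume_real_closedBall (by linarith), Complex.real_smul]
        push_cast
        ring
    _ ≤ ∫ η in B, f η * g (ξ - η) :=
        setIntegral_mono_on (integrableOn_const measure_closedBall_lt_top.ne) hfg.integrableOn
          measurableSet_closedBall hB
    _ ≤ conv f g ξ :=
        setIntegral_le_integral hfg (ae_of_all _ fun η => mul_nonneg (hf η) (hg (ξ - η)))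

/-- The `n`-fold self-convolution `f ∗ ⋯ ∗ f`, in the encoding used by the nonlinearity of `Ihat`;
its value at `n = 0` is `0` rather than the Dirac mass. -/
noncomputable def convPow (f : ℝ → ℂ) (n : ℕ) : ℝ → ℂ :=
  convList (List.replicate n f)

lemma convPow_one (f : ℝ → ℂ) : convPow f 1 = f := rfl

lemma convPow_add_two (f : ℝ → ℂ) (n : ℕ) : convPow f (n + 2) = conv f (convPow f (n + 1)) := rfl

lemma convPow_nonneg (hf : 0 ≤ f) (n : ℕ) : 0 ≤ convPow f n := by
  induction n using Nat.twoStepInduction with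
  | zero => exact le_rfl
  | one => rwa [convPow_one]
  | more n _ ih =>
    rw [convPow_add_two]
    exact conv_nonneg hf ih

lemma norm_convPow_succ_le {M : ℝ} (hf : Integrable f) (hM : ∀ ξ, ‖f ξ‖ ≤ M) (n : ℕ) (ξ : ℝ) :
    ‖convPow f (n + 1) ξ‖ ≤ (∫ η, ‖f η‖) ^ n * M := by
  induction n generalizing ξ with
  | zero => simpa [convPow_one] using hM ξ
  | succ n ih =>
    rw [convPow_add_two, pow_succ', mul_assoc]
    exact norm_conv_le hf ih ξ

lemma measurable_uncurry_convPow {α : Type*} [MeasurableSpace α] {u : α → ℝ → ℂ}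
    (hu : Measurable (Function.uncurry u)) (n : ℕ) :
    Measurable (Function.uncurry fun a => convPow (u a) n) := by
  induction n using Nat.twoStepInduction with
  | zero => exact measurable_const
  | one => simpa only [convPow_one] using hu
  | more n _ ih =>
    simp only [convPow_add_two]
    exact measurable_uncurry_conv hu ih

lemma integrable_mul_convPow_succ {M : ℝ} (hf : Integrable f) (hfm : Measurable f)
    (hM : ∀ ξ, ‖f ξ‖ ≤ M) (n : ℕ) (ξ : ℝ) :
    Integrable fun η => f η * convPow f (n + 1) (ξ - η) := by
  have hmeas : Measurable (convPow f (n + 1)) :=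
    (measurable_uncurry_convPow (u := fun _ : Unit => f) (hfm.comp measurable_snd)
      (n + 1)).of_uncurry_left (x := ())
  exact hf.mul_bdd (hmeas.comp (measurable_const.sub measurable_id)).aestronglyMeasurable
    (ae_of_all _ fun η => norm_convPow_succ_le hf hM n (ξ - η))

lemma ofReal_pow_le_convPow {M a r : ℝ} (hf : Integrable f) (hfm : Measurable f)
    (hM : ∀ ξ, ‖f ξ‖ ≤ M) (hf0 : 0 ≤ f) (ha : 0 ≤ a) (hr : 0 ≤ r) {n : ℕ} {l : List ℝ}
    (hl : l.length = n + 1) (hal : ∀ x ∈ l, ∀ η ∈ closedBall x r, (a : ℂ) ≤ f η)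
    {ξ : ℝ} (hξ : ξ ∈ closedBall l.sum r) :
    ((a ^ (n + 1) * r ^ n : ℝ) : ℂ) ≤ convPow f (n + 1) ξ := by
  induction n generalizing l ξ with
  | zero =>
    obtain ⟨x, rfl⟩ := List.length_eq_one_iff.mp hl
    simpa [convPow_one] using hal x (by simp) ξ (by simpa using hξ)
  | succ n ih =>
    obtain ⟨x, l, rfl⟩ := List.exists_cons_of_length_eq_add_one hl
    rw [List.forall_mem_cons] at hal
    have hstep := ofReal_mul_le_conv (by positivity) hf0 (convPow_nonneg hf0 (n + 1))
      (integrable_mul_convPow_succ hf hfm hM n ξ) hal.1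
      (fun η hη => ih (by simpa using hl) hal.2 hη) (by simpa using hξ)
    rw [convPow_add_two]
    convert! hstep using 2
    ring

end Convolution

section Dispersion

lemma lam_sq (ξ : ℝ) : lam ξ ^ 2 = ξ ^ 2 / (1 + ξ ^ 2) := by
  rw [lam, ← Real.sqrt_eq_rpow, div_pow, sq_abs, Real.sq_sqrt (by positivity)]

lemma lam_nonneg (ξ : ℝ) : 0 ≤ lam ξ := by
  unfold lam
  positivity

lemma lam_le_one (ξ : ℝ) : lam ξ ≤ 1 := by
  rw [← sq_le_one_iff₀ (lam_nonneg ξ), lam_sq]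
  exact div_le_one_of_le₀ (by linarith) (by positivity)

@[fun_prop]
lemma measurable_lam : Measurable lam := by
  unfold lam
  fun_prop

lemma sq_div_le_one_sub_cos_mul_lam {T ξ : ℝ} (hT₀ : 0 ≤ T) (hT : T ≤ Real.pi)
    (hξ : 1 / 4 ≤ |ξ|) : T ^ 2 / 85 ≤ 1 - Real.cos (T * lam ξ) := by
  have hlam : 1 / 17 ≤ lam ξ ^ 2 := by
    have hξ_sq : (1 / 4) ^ 2 ≤ ξ ^ 2 := by
      rw [← sq_abs ξ]
      gcongr
    rw [lam_sq, le_div_iff₀ (by positivity)]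
    linarith
  have hpi : 1 / 5 ≤ 2 / Real.pi ^ 2 := by
    rw [div_le_div_iff₀ (by norm_num) (by positivity)]
    nlinarith [Real.pi_lt_d2, Real.pi_pos]
  have harg : |T * lam ξ| ≤ Real.pi := by
    rw [abs_of_nonneg (mul_nonneg hT₀ (lam_nonneg ξ))]
    exact (mul_le_of_le_one_right hT₀ (lam_le_one ξ)).trans hT
  calc T ^ 2 / 85 = 1 / 5 * (T ^ 2 * (1 / 17)) := by ring
    _ ≤ 2 / Real.pi ^ 2 * (T ^ 2 * lam ξ ^ 2) := by gcongr
    _ = 2 / Real.pi ^ 2 * (T * lam ξ) ^ 2 := by rw [mul_pow]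
    _ ≤ 1 - Real.cos (T * lam ξ) := by linarith [Real.cos_le_one_sub_mul_cos_sq harg]

variable {t : ℝ} {φ : ℝ → ℂ}

lemma Shat_zero_right (t : ℝ) (φ : ℝ → ℂ) (ξ : ℝ) :
    Shat t φ 0 ξ = Real.cos (t * lam ξ) * φ ξ := by
  simp [Shat]

lemma norm_Shat_zero_right_le (t : ℝ) (φ : ℝ → ℂ) (ξ : ℝ) : ‖Shat t φ 0 ξ‖ ≤ ‖φ ξ‖ := by
  rw [Shat_zero_right, norm_mul, Complex.norm_real]
  exact mul_le_of_le_one_left (norm_nonneg _) (Real.abs_cos_le_one _)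

lemma measurable_uncurry_Shat_zero_right (hφ : Measurable φ) :
    Measurable (Function.uncurry fun t => Shat t φ 0) := by
  unfold Function.uncurry
  simp only [Shat_zero_right]
  fun_prop

lemma integrable_Shat_zero_right (t : ℝ) (hφ : Integrable φ) (hφm : Measurable φ) :
    Integrable (Shat t φ 0) :=
  hφ.mono (measurable_uncurry_Shat_zero_right hφm).of_uncurry_left.aestronglyMeasurable
    (ae_of_all _ (norm_Shat_zero_right_le t φ))

lemma half_le_cos_mul_lam (ht₀ : 0 ≤ t) (ht : t ≤ 1) (ξ : ℝ) :
    1 / 2 ≤ Real.cos (t * lam ξ) := by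
  have hle : t * lam ξ ≤ 1 := mul_le_one₀ ht (lam_nonneg ξ) (lam_le_one ξ)
  have hnonneg : 0 ≤ t * lam ξ := mul_nonneg ht₀ (lam_nonneg ξ)
  nlinarith [Real.one_sub_sq_div_two_le_cos (x := t * lam ξ)]

lemma half_mul_le_Shat_zero_right (hφ : 0 ≤ φ) (ht₀ : 0 ≤ t) (ht : t ≤ 1) (ξ : ℝ) :
    ((1 / 2 : ℝ) : ℂ) * φ ξ ≤ Shat t φ 0 ξ := by
  rw [Shat_zero_right]
  exact mul_le_mul_of_nonneg_right
    (Complex.real_le_real.mpr (half_le_cos_mul_lam ht₀ ht ξ)) (hφ ξ)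

end Dispersion

section FirstIterate

lemma Xi_one (k : ℕ) (v₀ v₁ : ℝ → ℂ) (T ξ : ℝ) :
    Xi k v₀ v₁ 1 T ξ = ∫ t in (0 : ℝ)..T,
      ((Real.sin ((T - t) * lam ξ) * lam ξ : ℝ) : ℂ) * convPow (Shat t v₀ v₁) k ξ := by
  rw [Xi]
  beta_reduce
  rw [Finset.sum_attach (Finset.Nat.antidiagonalTuple k 0)
    fun p => Ihat k (fun i => Xi k v₀ v₁ (p i)) T ξ, Finset.Nat.antidiagonalTuple_zero_right,
    Finset.sum_singleton]
  simp only [Ihat, Pi.zero_apply, Xi, List.ofFn_const, convPow]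

lemma integral_sin_sub_mul_mul (T l : ℝ) :
    ∫ t in (0 : ℝ)..T, Real.sin ((T - t) * l) * l = 1 - Real.cos (T * l) := by
  rw [intervalIntegral.integral_comp_sub_left (fun t => Real.sin (t * l) * l),
    intervalIntegral.integral_mul_const, mul_comm, intervalIntegral.mul_integral_comp_mul_right,
    integral_sin]
  simp

lemma mul_one_sub_cos_le_norm_integral {G : ℝ → ℂ} {T l b : ℝ} (hT : 0 ≤ T) (hl : 0 ≤ l)
    (hTl : T * l ≤ Real.pi) (hG : IntervalIntegrable G volume 0 T)
    (hb : ∀ t ∈ Set.Icc 0 T, (b : ℂ) ≤ G t) :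
    b * (1 - Real.cos (T * l)) ≤
      ‖∫ t in (0 : ℝ)..T, ((Real.sin ((T - t) * l) * l : ℝ) : ℂ) * G t‖ := by
  have hkernel : ∀ t ∈ Set.Icc 0 T, 0 ≤ Real.sin ((T - t) * l) * l := fun t ht =>
    mul_nonneg (Real.sin_nonneg_of_nonneg_of_le_pi (mul_nonneg (sub_nonneg.mpr ht.2) hl)
      (hTl.trans' (mul_le_mul_of_nonneg_right (sub_le_self T ht.1) hl))) hl
  have hint : IntervalIntegrable (fun t => ((Real.sin ((T - t) * l) * l : ℝ) : ℂ) * G t)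
      volume 0 T := hG.continuousOn_mul (by fun_prop)
  have hle : ((b * (1 - Real.cos (T * l)) : ℝ) : ℂ) ≤
      ∫ t in (0 : ℝ)..T, ((Real.sin ((T - t) * l) * l : ℝ) : ℂ) * G t := by
    rw [← integral_sin_sub_mul_mul, mul_comm, ← intervalIntegral.integral_mul_const,
      ← intervalIntegral.integral_ofReal, intervalIntegral.integral_of_le hT,
      intervalIntegral.integral_of_le hT]
    refine setIntegral_mono_on ?_ hint.1 measurableSet_Ioc fun t ht => ?_
    · exact (Continuous.intervalIntegrable (by fun_prop) 0 T).1
    · have ht' := Set.Ioc_subset_Icc_self ht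
      rw [Complex.ofReal_mul]
      exact mul_le_mul_of_nonneg_left (hb t ht') (Complex.zero_le_real.mpr (hkernel t ht'))
  exact (Complex.re_le_re hle).trans (Complex.re_le_norm _)

variable {φ : ℝ → ℂ} {M R T ξ : ℝ}

lemma intervalIntegrable_convPow_Shat_zero_right (hφ : Integrable φ) (hφm : Measurable φ)
    (hM : ∀ ξ, ‖φ ξ‖ ≤ M) (n : ℕ) (ξ a b : ℝ) :
    IntervalIntegrable (fun t => convPow (Shat t φ 0) (n + 1) ξ) volume a b := by
  have hmeas : Measurable fun t => convPow (Shat t φ 0) (n + 1) ξ :=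
    (measurable_uncurry_convPow (measurable_uncurry_Shat_zero_right hφm) (n + 1)).of_uncurry_right
  have hM₀ : 0 ≤ M := (norm_nonneg _).trans (hM 0)
  have hbound : ∀ t, ‖convPow (Shat t φ 0) (n + 1) ξ‖ ≤ (∫ η, ‖φ η‖) ^ n * M := fun t => by
    have hw := integrable_Shat_zero_right t hφ hφm
    calc _ ≤ (∫ η, ‖Shat t φ 0 η‖) ^ n * M :=
          norm_convPow_succ_le hw (fun η => (norm_Shat_zero_right_le t φ η).trans (hM η)) n ξ
      _ ≤ (∫ η, ‖φ η‖) ^ n * M := by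
          gcongr
          exacts [hw.norm, hφ.norm, norm_Shat_zero_right_le t φ]
  rw [intervalIntegrable_iff]
  exact Measure.integrableOn_of_bounded (by simp) hmeas.aestronglyMeasurable (ae_of_all _ hbound)

lemma mul_one_sub_cos_le_norm_Xi_one {r : ℝ} (hφ : Integrable φ) (hφm : Measurable φ)
    (hM : ∀ ξ, ‖φ ξ‖ ≤ M) (hφ₀ : 0 ≤ φ) (hR : 0 ≤ R) (hr : 0 ≤ r) (hT₀ : 0 ≤ T) (hT : T ≤ 1)
    {n : ℕ} {l : List ℝ} (hl : l.length = n + 1)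
    (hRl : ∀ x ∈ l, ∀ η ∈ closedBall x r, (R : ℂ) ≤ φ η) (hξ : ξ ∈ closedBall l.sum r) :
    (R / 2) ^ (n + 1) * r ^ n * (1 - Real.cos (T * lam ξ)) ≤ ‖Xi (n + 1) φ 0 1 T ξ‖ := by
  have hTlam : T * lam ξ ≤ Real.pi :=
    (mul_le_one₀ hT (lam_nonneg ξ) (lam_le_one ξ)).trans (by linarith [Real.pi_gt_three])
  rw [Xi_one]
  refine mul_one_sub_cos_le_norm_integral hT₀ (lam_nonneg ξ) hTlam
    (intervalIntegrable_convPow_Shat_zero_right hφ hφm hM n ξ 0 T) fun t ht => ?_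
  have hlow := half_mul_le_Shat_zero_right hφ₀ ht.1 (ht.2.trans hT)
  have hhalf : (0 : ℂ) ≤ ((1 / 2 : ℝ) : ℂ) := Complex.zero_le_real.mpr (by norm_num)
  refine ofReal_pow_le_convPow (integrable_Shat_zero_right t hφ hφm)
    (measurable_uncurry_Shat_zero_right hφm).of_uncurry_left
    (fun η => (norm_Shat_zero_right_le t φ η).trans (hM η))
    (fun η => (mul_nonneg hhalf (hφ₀ η)).trans (hlow η)) (by positivity) hr hl
    (fun x hx η hη => ?_) hξ
  calc ((R / 2 : ℝ) : ℂ) = ((1 / 2 : ℝ) : ℂ) * R := by push_cast; ring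
    _ ≤ ((1 / 2 : ℝ) : ℂ) * φ η := mul_le_mul_of_nonneg_left (hRl x hx η hη) hhalf
    _ ≤ Shat t φ 0 η := hlow η

end FirstIterate

section Data

variable {R N A T ξ : ℝ}

lemma measurableSet_Omeg (N A : ℝ) : MeasurableSet (Omeg N A) :=
  .biUnion (Set.toFinite _).countable fun _ _ => measurableSet_Icc

lemma volume_Omeg_lt_top (N A : ℝ) : volume (Omeg N A) < ⊤ :=
  measure_biUnion_lt_top (Set.toFinite _) fun _ _ => measure_Icc_lt_top

lemma measurable_phihat (R N A : ℝ) : Measurable (phihat R N A) :=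
  measurable_const.indicator (measurableSet_Omeg N A)

lemma integrable_phihat (R N A : ℝ) : Integrable (phihat R N A) :=
  (integrable_indicator_iff (measurableSet_Omeg N A)).mpr
    (integrableOn_const (volume_Omeg_lt_top N A).ne)

lemma norm_phihat_le (R N A ξ : ℝ) : ‖phihat R N A ξ‖ ≤ |R| :=
  (norm_indicator_le_norm_self _ ξ).trans_eq (Complex.norm_real R)

lemma phihat_nonneg (hR : 0 ≤ R) (N A : ℝ) : 0 ≤ phihat R N A :=
  Set.indicator_nonneg fun _ _ => Complex.zero_le_real.mpr hR

lemma phihat_eq_of_mem_closedBall (R : ℝ) {x : ℝ}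
    (hx : x ∈ ({-(2 * N), -N, N, 2 * N} : Set ℝ)) (hξ : ξ ∈ closedBall x (A / 2)) :
    phihat R N A ξ = R :=
  Set.indicator_of_mem (Set.mem_biUnion hx (Real.closedBall_eq_Icc ▸ hξ)) _

lemma exists_list_frequencies_sum_eq_zero (N : ℝ) (n : ℕ) :
    ∃ l : List ℝ, l.length = n + 2 ∧ (∀ x ∈ l, x ∈ ({-(2 * N), -N, N, 2 * N} : Set ℝ)) ∧
      l.sum = 0 := by
  induction n using Nat.twoStepInduction with
  | zero => exact ⟨[N, -N], by simp⟩
  | one => exact ⟨[N, N, -(2 * N)], rfl, by simp, by simp; ring⟩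
  | more n ih _ =>
    obtain ⟨l, hlen, hmem, hsum⟩ := ih
    exact ⟨N :: -N :: l, by simp [hlen], by simpa using hmem, by simp [hsum]⟩

lemma le_norm_Xi_one_phihat (hR : 0 ≤ R) (hA : 1 ≤ A) (N : ℝ) (hT₀ : 0 ≤ T) (hT : T ≤ 1) (n : ℕ)
    (hξ : ξ ∈ Set.Icc (A / 4) (A / 2)) :
    (R / 2) ^ (n + 2) * (A / 2) ^ (n + 1) * (T ^ 2 / 85) ≤ ‖Xi (n + 2) (phihat R N A) 0 1 T ξ‖ := by
  obtain ⟨l, hlen, hmem, hsum⟩ := exists_list_frequencies_sum_eq_zero N n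
  have hξ₀ : 0 ≤ ξ := by linarith [hξ.1]
  have hξl : ξ ∈ closedBall l.sum (A / 2) := by
    rw [hsum, mem_closedBall_zero_iff, Real.norm_of_nonneg hξ₀]
    exact hξ.2
  have hsmall : T ^ 2 / 85 ≤ 1 - Real.cos (T * lam ξ) :=
    sq_div_le_one_sub_cos_mul_lam hT₀ (by linarith [Real.pi_gt_three])
      (by rw [abs_of_nonneg hξ₀]; linarith [hξ.1])
  calc _ ≤ (R / 2) ^ (n + 2) * (A / 2) ^ (n + 1) * (1 - Real.cos (T * lam ξ)) := by gcongr
    _ ≤ _ := mul_one_sub_cos_le_norm_Xi_one (integrable_phihat R N A) (measurable_phihat R N A)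
      (norm_phihat_le R N A) (phihat_nonneg hR N A) hR (by positivity) hT₀ hT hlen
      (fun x hx η hη => (phihat_eq_of_mem_closedBall R (hmem x hx) hη).ge) hξl

end Data

section Norms

lemma rpow_neg_abs_mul_rpow_le {x y C : ℝ} (hx : 0 < x) (hy : 0 < y) (hC : 0 < C)
    (hxy : x ≤ C * y) (hyx : y ≤ C * x) (p : ℝ) : C ^ (-|p|) * x ^ p ≤ y ^ p := by
  rcases le_total 0 p with hp | hp
  · rw [abs_of_nonneg hp, Real.rpow_neg hC.le, inv_mul_le_iff₀ (by positivity),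
      ← Real.mul_rpow hC.le hy.le]
    exact Real.rpow_le_rpow hx.le hxy hp
  · rw [abs_of_nonpos hp, neg_neg, ← Real.mul_rpow hC.le hx.le]
    exact Real.rpow_le_rpow_of_nonpos hy hyx hp

lemma mul_rpow_le_jbw {A ξ : ℝ} (hA : 1 ≤ A) (hξ : ξ ∈ Set.Icc (A / 4) (A / 2)) (s : ℝ) :
    16 ^ (-|s / 2|) * A ^ s ≤ jbw s ξ := by
  have hA_sq : (A ^ 2) ^ (s / 2) = A ^ s := by
    rw [← Real.rpow_natCast_mul (by linarith)]
    congr 1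
    push_cast
    ring
  rw [← hA_sq]
  exact rpow_neg_abs_mul_rpow_le (by positivity) (by positivity) (by norm_num)
    (by nlinarith [hξ.1]) (by nlinarith [hξ.1, hξ.2]) (s / 2)

lemma ofReal_mul_measure_rpow_le_eLpNorm {α E : Type*} [MeasurableSpace α] {μ : Measure α}
    [NormedAddCommGroup E] {f : α → E} {S : Set α} {q : ℝ≥0∞} {c : ℝ} (hq : q ≠ 0)
    (hS : MeasurableSet S) (hμS : μ S ≠ 0) (hc : 0 ≤ c) (hcf : ∀ x ∈ S, c ≤ ‖f x‖) :
    ENNReal.ofReal c * μ S ^ (1 / q.toReal) ≤ eLpNorm f q μ := by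
  rw [← Real.enorm_of_nonneg hc, ← eLpNorm_indicator_const' hS hμS hq]
  refine eLpNorm_mono fun x => ?_
  by_cases hx : x ∈ S
  · simpa [hx, abs_of_nonneg hc] using hcf x hx
  · simp [hx]

lemma ofReal_mul_rpow_le_FLnorm {A b s : ℝ} {q : ℝ≥0∞} {w : ℝ → ℂ} (hq : q ≠ 0) (hA : 1 ≤ A)
    (hb : 0 ≤ b) (hw : ∀ ξ ∈ Set.Icc (A / 4) (A / 2), b ≤ ‖w ξ‖) :
    ENNReal.ofReal (16 ^ (-|s / 2|) * A ^ s * b * (A / 4) ^ (1 / q.toReal)) ≤ FLnorm s q w := by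
  have hvol : volume (Set.Icc (A / 4) (A / 2)) = ENNReal.ofReal (A / 4) := by
    rw [Real.volume_Icc]
    congr 1
    ring
  rw [ENNReal.ofReal_mul (by positivity), ← ENNReal.ofReal_rpow_of_pos (by linarith), ← hvol]
  refine ofReal_mul_measure_rpow_le_eLpNorm hq measurableSet_Icc ?_ (by positivity)
    fun ξ hξ => ?_
  · rw [hvol]
    exact (ENNReal.ofReal_pos.mpr (by linarith)).ne'
  · have hjbw := mul_rpow_le_jbw hA hξ s
    rw [norm_mul, norm_norm, Real.norm_of_nonneg (hjbw.trans' (by positivity))]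
    exact mul_le_mul hjbw (hw ξ hξ) hb (hjbw.trans' (by positivity))

end Norms

theorem first_picard_lower_bound_FourierLebesgue_general
    (k : ℕ) (hk : 2 ≤ k) (s : ℝ) (q : ℝ≥0∞) (hq : q ≠ 0) :
    ∃ c : ℝ, 0 < c ∧ ∀ R A N T : ℝ, 0 ≤ R → 1 ≤ A → 0 ≤ T → T ≤ 1 →
      ENNReal.ofReal (c * R ^ k * T ^ 2 * A ^ ((k : ℝ) - 1 + 1 / q.toReal + s)) ≤
        FLnorm s q (Xi k (phihat R N A) 0 1 T) := by
  obtain ⟨n, rfl⟩ := Nat.exists_eq_add_of_le' hk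
  refine ⟨16 ^ (-|s / 2|) * (1 / 2) ^ (n + 2) * (1 / 2) ^ (n + 1) / 85 * (1 / 4) ^ (1 / q.toReal),
    by positivity, fun R A N T hR hA hT₀ hT => ?_⟩
  have hA₀ : 0 < A := by linarith
  have hsplit : A ^ (((n + 2 : ℕ) : ℝ) - 1 + 1 / q.toReal + s) =
      A ^ (n + 1) * A ^ (1 / q.toReal) * A ^ s := by
    rw [← Real.rpow_natCast, ← Real.rpow_add hA₀, ← Real.rpow_add hA₀]
    congr 3
    push_cast
    ring
  have hquarter : (A / 4) ^ (1 / q.toReal) = A ^ (1 / q.toReal) * (1 / 4) ^ (1 / q.toReal) := by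
    rw [← Real.mul_rpow hA₀.le (by norm_num), mul_one_div]
  convert! ofReal_mul_rpow_le_FLnorm (s := s) hq hA (by positivity)
    (fun ξ hξ => le_norm_Xi_one_phihat hR hA N hT₀ hT n hξ) using 2
  rw [hsplit, hquarter]
  ring

/-- Lower bound for the first Picard iterate in Fourier–Lebesgue norms:
`‖⟨ξ⟩^s Ξ̂₁(φ̂, 0)(T)‖_{L^q} ≥ c·R^k·T²·A^{k - 1 + 1/q + s}`, with the convention
`1/q = 0` for `q = ∞` (note `(⊤ : ℝ≥0∞).toReal = 0`). -/
theorem first_picard_lower_bound_FourierLebesgue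
    (k : ℕ) (hk : 2 ≤ k) (s : ℝ) (hs : s < 0) (q : ℝ≥0∞) (hq : 1 ≤ q) :
    ∃ c δ : ℝ, 0 < c ∧ 0 < δ ∧
      ∀ R A N T : ℝ, 0 < R → 1 ≤ A → A ≤ δ * N → 0 < T → T ≤ δ →
        ENNReal.ofReal (c * R ^ k * T ^ 2 * A ^ ((k : ℝ) - 1 + 1 / q.toReal + s)) ≤
          FLnorm s q (Xi k (phihat R N A) 0 1 T) := by
  obtain ⟨c, hc, hbound⟩ := first_picard_lower_bound_FourierLebesgue_general k hk s q
    (zero_lt_one.trans_le hq).ne'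
  exact ⟨c, 1, hc, one_pos, fun R A N T hR hA _ hT₀ hT => hbound R A N T hR.le hA hT₀.le hT⟩
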